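/- Let n ≥ 2, let H : ℝ^{n+1} → ℝ be a smooth function of the coordinates (v, u, x², …, xⁿ) that is independent of v, and let g be the pp-wave metric in Brinkmann coordinates: g_{vv} = 0, g_{vu} = g_{uv} = 1, g_{uu} = H, g_{ii} = 1 for 2 ≤ i ≤ n, all other entries zero. Then the components (∇_m Rm)_{ijkl} of the coordinate covariant derivative of the curvature 4-tensor vanish for all m ∈ {v, 2, …, n} (i.e. ∇_X Rm = 0 for every coordinate direction X orthogonal to ∂_v other than ∂_u) if and only if ∂_i∂_j∂_k H = 0 for all 2 ≤ i, j, k ≤ n, i.e. if and only if H is a polynomial of degree at most 2 in the variables x², …, xⁿ (with u-dependent coefficients). Moreover, when H is such a quadratic polynomial, (∇_{∂_u} Rm)(∂_i, ∂_u, ∂_u, ∂_j) = −(1/2) ∂_u∂_i∂_j H for 2 ≤ i,j ≤ n, and every component of ∇Rm not obtained from these by the symmetries of Rm vanishes; in particular g is locally symmetric (∇Rm = 0) if and only if in addition all ∂_u∂_i∂_j H = 0. -/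

import Mathlib

open Matrix

/-- Partial derivative of a function on `ℝ^m` in the `i`-th coordinate direction. -/
noncomputable def pd {m : ℕ} (i : Fin m) (f : (Fin m → ℝ) → ℝ) (x : Fin m → ℝ) : ℝ :=
  fderiv ℝ f x (Pi.single i 1)

/-- Christoffel symbols `Γ^k_{ij}` of a metric given in coordinates. -/
noncomputable def Chr {m : ℕ} (g : (Fin m → ℝ) → Matrix (Fin m) (Fin m) ℝ)
    (k i j : Fin m) (x : Fin m → ℝ) : ℝ :=
  (1/2) * ∑ l, (g x)⁻¹ k l *
    (pd i (fun y => g y j l) x + pd j (fun y => g y i l) x - pd l (fun y => g y i j) x)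

/-- Coordinate curvature `R_{ijk}{}^l`. -/
noncomputable def RiemUp {m : ℕ} (g : (Fin m → ℝ) → Matrix (Fin m) (Fin m) ℝ)
    (i j k l : Fin m) (x : Fin m → ℝ) : ℝ :=
  pd i (Chr g l j k) x - pd j (Chr g l i k) x
  + ∑ p, (Chr g l i p x * Chr g p j k x - Chr g l j p x * Chr g p i k x)

/-- Coordinate curvature 4-tensor `Rm_{ijkl} = Σ_m g_{lm} R_{ijk}{}^m`. -/
noncomputable def Rm4 {m : ℕ} (g : (Fin m → ℝ) → Matrix (Fin m) (Fin m) ℝ)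
    (i j k l : Fin m) (x : Fin m → ℝ) : ℝ :=
  ∑ p, g x l p * RiemUp g i j k p x

/-- Coordinate covariant derivative `(∇_m Rm)_{ijkl}` of the curvature 4-tensor. -/
noncomputable def CovDRm {m : ℕ} (g : (Fin m → ℝ) → Matrix (Fin m) (Fin m) ℝ)
    (mm i j k l : Fin m) (x : Fin m → ℝ) : ℝ :=
  pd mm (Rm4 g i j k l) x - ∑ p,
    (Chr g p mm i x * Rm4 g p j k l x + Chr g p mm j x * Rm4 g i p k l x
      + Chr g p mm k x * Rm4 g i j p l x + Chr g p mm l x * Rm4 g i j k p x)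

/-!
In Brinkmann coordinates the metric is `g = η + H ξ ⊗ ξ` with `η` constant, `ξ = du` null for `η`,
and `H` constant along the null vector `ℓ = η⁻¹ ξ = ∂ᵥ`. Hence `g` and `η` raise indices in the same
way on covectors annihilating `ℓ`, and every covector met below annihilates `ℓ`: `ξ` itself, the
differential of `H`, and the rows of its Hessian. Consequently

* `Γ` is obtained from its first-kind symbols by raising with `η`, and `Γ Γ` is the tensor
  `ℓ ⊗ ξ ⊗ ξ ⊗ ξ` up to a scalar factor, so it drops out of the curvature;
* `Rm(X, Y, Z, W) = ½ Hess H (ξ(X) Y - ξ(Y) X, ξ(Z) W - ξ(W) Z)`;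
* in `∇Rm` the contractions of `Γ` with the slots of `Rm` cancel in pairs, so `∇ₘRm` is given by the
  same expression with `∂ₘ Hess H` in place of `Hess H`.

With `ξ = du` the vector `ξ(∂ₐ) ∂_b - ξ(∂_b) ∂ₐ` is nonzero only if exactly one of `a`, `b` is `u`,
and it is then `± ∂ᵢ` for the other index `i`; the `v`-row of `Hess H` vanishes.
-/

section PartialDerivatives

variable {m : ℕ} {f f' : (Fin m → ℝ) → ℝ}

theorem contDiff_pd {r s : WithTop ℕ∞} (hf : ContDiff ℝ s f) (hrs : r + 1 ≤ s) (i : Fin m) :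
    ContDiff ℝ r (pd i f) :=
  (hf.fderiv_right hrs).clm_apply contDiff_const

theorem differentiable_pd (hf : ContDiff ℝ 2 f) (i : Fin m) : Differentiable ℝ (pd i f) :=
  (contDiff_pd (r := 1) hf (by norm_num) i).differentiable one_ne_zero

theorem differentiable_pd_pd (hf : ContDiff ℝ 3 f) (i j : Fin m) :
    Differentiable ℝ (pd i (pd j f)) :=
  differentiable_pd (contDiff_pd hf (by norm_num) j) i

theorem pd_const_mul (i : Fin m) (c : ℝ) (hf : Differentiable ℝ f) (x : Fin m → ℝ) :
    pd i (fun y => c * f y) x = c * pd i f x := by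
  simp [pd, fderiv_const_mul (hf x)]

theorem pd_add (i : Fin m) (hf : Differentiable ℝ f) (hf' : Differentiable ℝ f')
    (x : Fin m → ℝ) : pd i (fun y => f y + f' y) x = pd i f x + pd i f' x := by
  simp [pd, fderiv_fun_add (hf x) (hf' x)]

theorem pd_sub (i : Fin m) (hf : Differentiable ℝ f) (hf' : Differentiable ℝ f')
    (x : Fin m → ℝ) : pd i (fun y => f y - f' y) x = pd i f x - pd i f' x := by
  simp [pd, fderiv_fun_sub (hf x) (hf' x)]

theorem pd_dotProduct {ι : Type*} [Fintype ι] (i : Fin m) (v : ι → ℝ)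
    {F : ι → (Fin m → ℝ) → ℝ} (hF : ∀ l, Differentiable ℝ (F l)) (x : Fin m → ℝ) :
    pd i (fun y => v ⬝ᵥ fun l => F l y) x = v ⬝ᵥ fun l => pd i (F l) x := by
  simp only [pd, dotProduct]
  rw [fderiv_fun_sum fun l _ => (hF l x).const_mul (v l), _root_.sum_apply]
  exact Finset.sum_congr rfl fun l _ => pd_const_mul i (v l) (hF l) x

theorem dotProduct_pd (v : Fin m → ℝ) (f : (Fin m → ℝ) → ℝ) (x : Fin m → ℝ) :
    (v ⬝ᵥ fun i => pd i f x) = fderiv ℝ f x v := by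
  have hv : v = ∑ i, v i • Pi.single i (1 : ℝ) := by
    ext j
    simp [Finset.sum_apply, Pi.single_apply]
  conv_rhs => rw [hv, map_sum]
  simp only [map_smul, smul_eq_mul, dotProduct, pd]

theorem fderiv_pd_apply (hf : ContDiff ℝ 2 f) (i : Fin m) (x v : Fin m → ℝ) :
    fderiv ℝ (pd i f) x v = fderiv ℝ (fun y => fderiv ℝ f y v) x (Pi.single i 1) := by
  have hf' : DifferentiableAt ℝ (fderiv ℝ f) x :=
    (hf.fderiv_right (m := 1) (by norm_num)).differentiable one_ne_zero x
  have hsymm : IsSymmSndFDerivAt ℝ f x := hf.contDiffAt.isSymmSndFDerivAt (by simp)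
  have hpd : pd i f = fun y => fderiv ℝ f y (Pi.single i 1) := rfl
  rw [hpd, fderiv_clm_apply hf' (differentiableAt_const _),
    fderiv_clm_apply hf' (differentiableAt_const _)]
  simpa using hsymm v (Pi.single i 1)

theorem pd_comm (hf : ContDiff ℝ 2 f) (i j : Fin m) : pd i (pd j f) = pd j (pd i f) :=
  funext fun x => fderiv_pd_apply hf j x (Pi.single i 1)

theorem fderiv_pd_apply_eq_zero (hf : ContDiff ℝ 2 f) {v : Fin m → ℝ}
    (hv : ∀ x, fderiv ℝ f x v = 0) (i : Fin m) (x : Fin m → ℝ) :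
    fderiv ℝ (pd i f) x v = 0 := by
  simp [fderiv_pd_apply hf, hv]

theorem pd_pd_pd_comm (hf : ContDiff ℝ 3 f) (i j k : Fin m) (x : Fin m → ℝ) :
    pd i (pd j (pd k f)) x = pd i (pd k (pd j f)) x := by
  rw [pd_comm (hf.of_le (by norm_num)) j k]

theorem pd_pd_pd_eq_zero (hf : ContDiff ℝ 3 f) {k : Fin m} (hk : ∀ x, pd k f x = 0)
    (i j : Fin m) (x : Fin m → ℝ) : pd k (pd i (pd j f)) x = 0 :=
  fderiv_pd_apply_eq_zero (contDiff_pd hf (by norm_num) j)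
    (fderiv_pd_apply_eq_zero (hf.of_le (by norm_num)) hk j) i x

theorem pd_pd_pd_eq_zero_of_middle (hf : ContDiff ℝ 3 f) {k : Fin m} (hk : ∀ x, pd k f x = 0)
    (i j : Fin m) (x : Fin m → ℝ) : pd i (pd k (pd j f)) x = 0 := by
  rw [pd_comm (contDiff_pd hf (by norm_num) j), pd_pd_pd_eq_zero hf hk]

theorem pd_eq_zero_of_update (hf : Differentiable ℝ f) {i : Fin m}
    (hupdate : ∀ (x : Fin m → ℝ) (c : ℝ), f (Function.update x i c) = f x)
    (x : Fin m → ℝ) : pd i f x = 0 := by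
  have hchain : HasDerivAt (fun c => f (Function.update x i c)) (pd i f x) (x i) := by
    have h := (hf (Function.update x i (x i))).hasFDerivAt.comp_hasDerivAt (x i)
      (hasDerivAt_update x i (x i))
    rwa [Function.update_eq_self] at h
  simp only [hupdate] at hchain
  exact hchain.unique (hasDerivAt_const _ _)

end PartialDerivatives

section CurvatureAlgebra

variable {ι : Type*}

/-- Christoffel symbols of the first kind `½ (∂ᵢ h_{jl} + ∂ⱼ h_{il} - ∂ₗ h_{ij})` of `h = H ξ ⊗ ξ`
with `ξ` constant, where `d` stands for the covector of first partial derivatives of `H`. The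
lowered index `l` comes last. -/
noncomputable def waveChr (ξ d : ι → ℝ) (i j l : ι) : ℝ :=
  (1/2) * (ξ l * (ξ j * d i + ξ i * d j) - ξ i * ξ j * d l)

/-- The algebraic curvature tensor `½ S(θᵢⱼ, θₖₗ)`, `θᵢⱼ = ξᵢ eⱼ - ξⱼ eᵢ`, of a covector `ξ` and a
bilinear form `S`. The curvature of a pp-wave, and its covariant derivative, have this form with
`S` built from derivatives of the profile. -/
noncomputable def waveCurv (ξ : ι → ℝ) (S : ι → ι → ℝ) (i j k l : ι) : ℝ :=
  (1/2) * (ξ l * (ξ j * S i k - ξ i * S j k) + ξ k * (ξ i * S j l - ξ j * S i l))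

variable (ξ : ι → ℝ) (S : ι → ι → ℝ)

theorem waveCurv_antisymm_right (i j k l : ι) :
    waveCurv ξ S i j k l = -waveCurv ξ S i j l k := by
  simp only [waveCurv]; ring

variable {S} in
theorem waveCurv_pair_symm (hS : ∀ a b, S a b = S b a) (i j k l : ι) :
    waveCurv ξ S i j k l = waveCurv ξ S k l i j := by
  simp only [waveCurv, hS k, hS l]; ring

variable [Fintype ι]

theorem dotProduct_waveChr (v d : ι → ℝ) (i j : ι) :
    v ⬝ᵥ waveChr ξ d i j =
      (1/2) * ((v ⬝ᵥ ξ) * (ξ j * d i + ξ i * d j) - ξ i * ξ j * (v ⬝ᵥ d)) := by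
  simp only [waveChr, dotProduct, Finset.sum_mul, Finset.mul_sum, ← Finset.sum_sub_distrib]
  exact Finset.sum_congr rfl fun l _ => by ring

theorem dotProduct_waveCurv (v : ι → ℝ) (i j k : ι) :
    v ⬝ᵥ waveCurv ξ S i j k =
      (1/2) * ((v ⬝ᵥ ξ) * (ξ j * S i k - ξ i * S j k)
        + ξ k * (ξ i * (v ⬝ᵥ S j) - ξ j * (v ⬝ᵥ S i))) := by
  simp only [waveCurv, dotProduct, Finset.sum_mul, Finset.mul_sum, ← Finset.sum_sub_distrib,
    ← Finset.sum_add_distrib]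
  exact Finset.sum_congr rfl fun l _ => by ring

end CurvatureAlgebra

theorem inv_add_smul_vecMulVec {ι R : Type*} [Fintype ι] [DecidableEq ι] [CommRing R]
    {A : Matrix ι ι R} (hA : IsUnit A.det) {u v : ι → R} (huv : v ⬝ᵥ A⁻¹ *ᵥ u = 0) (c : R) :
    (A + c • vecMulVec u v)⁻¹ = A⁻¹ - c • vecMulVec (A⁻¹ *ᵥ u) (v ᵥ* A⁻¹) := by
  refine Matrix.inv_eq_right_inv ?_
  simp [add_mul, mul_sub, Matrix.mul_nonsing_inv A hA, mul_vecMulVec, vecMulVec_mul,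
    vecMulVec_mulVec, ← dotProduct_mulVec, huv]

/-- The Kerr–Schild metric `η + H ξ ⊗ ξ` over the constant metric `η`. -/
def kerrSchild {m : ℕ} (η : Matrix (Fin m) (Fin m) ℝ) (ξ : Fin m → ℝ) (H : (Fin m → ℝ) → ℝ)
    (x : Fin m → ℝ) : Matrix (Fin m) (Fin m) ℝ :=
  η + H x • vecMulVec ξ ξ

/-- The Kerr–Schild metric `η + H ξ ⊗ ξ` is a pp-wave: `η` is a constant metric of any signature,
`ξ` a covector that is null for `η`, and the profile `H` is constant along the null vector
`η⁻¹ ξ`. In Brinkmann coordinates `ξ = du` and `η⁻¹ ξ = ∂ᵥ`. -/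
structure IsPPWave {m : ℕ} (η : Matrix (Fin m) (Fin m) ℝ) (ξ : Fin m → ℝ)
    (H : (Fin m → ℝ) → ℝ) : Prop where
  isSymm : η.IsSymm
  isUnit_det : IsUnit η.det
  null : ξ ⬝ᵥ η⁻¹ *ᵥ ξ = 0
  fderiv_apply : ∀ x, fderiv ℝ H x (η⁻¹ *ᵥ ξ) = 0

namespace IsPPWave

variable {m : ℕ} {η : Matrix (Fin m) (Fin m) ℝ} {ξ : Fin m → ℝ} {H : (Fin m → ℝ) → ℝ}

theorem inv_mulVec_dotProduct (hw : IsPPWave η ξ H) (v w : Fin m → ℝ) :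
    η⁻¹ *ᵥ v ⬝ᵥ w = v ⬝ᵥ η⁻¹ *ᵥ w := by
  rw [dotProduct_mulVec, ← mulVec_transpose, hw.isSymm.inv.eq]

theorem dotProduct_inv_mulVec_pd (hw : IsPPWave η ξ H) (x : Fin m → ℝ) :
    (ξ ⬝ᵥ η⁻¹ *ᵥ fun p => pd p H x) = 0 := by
  rw [← hw.inv_mulVec_dotProduct, dotProduct_pd, hw.fderiv_apply]

theorem dotProduct_inv_mulVec_pd_pd (hw : IsPPWave η ξ H) (hH : ContDiff ℝ 2 H) (b : Fin m)
    (x : Fin m → ℝ) : (ξ ⬝ᵥ η⁻¹ *ᵥ fun p => pd b (pd p H) x) = 0 := by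
  simp only [pd_comm hH b]
  rw [← hw.inv_mulVec_dotProduct, dotProduct_pd, fderiv_pd_apply_eq_zero hH hw.fderiv_apply]

theorem inv_kerrSchild_mulVec (hw : IsPPWave η ξ H) {φ : Fin m → ℝ} (hφ : ξ ⬝ᵥ η⁻¹ *ᵥ φ = 0)
    (x : Fin m → ℝ) : (kerrSchild η ξ H x)⁻¹ *ᵥ φ = η⁻¹ *ᵥ φ := by
  rw [kerrSchild, inv_add_smul_vecMulVec hw.isUnit_det hw.null, Matrix.sub_mulVec,
    Matrix.smul_mulVec, vecMulVec_mulVec, ← dotProduct_mulVec, hφ]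
  simp

theorem kerrSchild_mulVec_inv_mulVec (hw : IsPPWave η ξ H) {φ : Fin m → ℝ}
    (hφ : ξ ⬝ᵥ η⁻¹ *ᵥ φ = 0) (x : Fin m → ℝ) : kerrSchild η ξ H x *ᵥ (η⁻¹ *ᵥ φ) = φ := by
  rw [kerrSchild, Matrix.add_mulVec, Matrix.smul_mulVec, vecMulVec_mulVec, hφ,
    Matrix.mulVec_mulVec, Matrix.mul_nonsing_inv η hw.isUnit_det]
  simp

theorem dotProduct_inv_mulVec_waveChr (hw : IsPPWave η ξ H) (i j : Fin m) (x : Fin m → ℝ) :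
    (ξ ⬝ᵥ η⁻¹ *ᵥ waveChr ξ (fun p => pd p H x) i j) = 0 := by
  rw [← hw.inv_mulVec_dotProduct, dotProduct_waveChr, hw.inv_mulVec_dotProduct,
    hw.inv_mulVec_dotProduct, hw.null, hw.dotProduct_inv_mulVec_pd]
  ring

theorem dotProduct_inv_mulVec_waveCurv (hw : IsPPWave η ξ H) (hH : ContDiff ℝ 2 H)
    (i j k : Fin m) (x : Fin m → ℝ) :
    ξ ⬝ᵥ η⁻¹ *ᵥ waveCurv ξ (fun a b => pd a (pd b H) x) i j k = 0 := by
  rw [← hw.inv_mulVec_dotProduct, dotProduct_waveCurv]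
  simp only [hw.inv_mulVec_dotProduct, hw.null, hw.dotProduct_inv_mulVec_pd_pd hH]
  ring

theorem pd_kerrSchild (hH : Differentiable ℝ H) (k i j : Fin m) (x : Fin m → ℝ) :
    pd k (fun y => kerrSchild η ξ H y i j) x = ξ i * ξ j * pd k H x := by
  rw [← pd_const_mul k _ hH]
  simp [pd, kerrSchild, vecMulVec_apply, mul_comm]

theorem chr_eq (hw : IsPPWave η ξ H) (hH : Differentiable ℝ H) (k i j : Fin m) (x : Fin m → ℝ) :
    Chr (kerrSchild η ξ H) k i j x = (η⁻¹ *ᵥ waveChr ξ (fun p => pd p H x) i j) k := by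
  rw [← hw.inv_kerrSchild_mulVec (hw.dotProduct_inv_mulVec_waveChr i j x) x]
  simp only [Chr, pd_kerrSchild hH, Matrix.mulVec, dotProduct, waveChr, Finset.mul_sum]
  exact Finset.sum_congr rfl fun l _ => by ring

theorem pd_chr (hw : IsPPWave η ξ H) (hH : ContDiff ℝ 2 H) (a k i j : Fin m) (x : Fin m → ℝ) :
    pd a (Chr (kerrSchild η ξ H) k i j) x =
      (η⁻¹ *ᵥ waveChr ξ (fun p => pd a (pd p H) x) i j) k := by
  have hd := differentiable_pd hH
  have hpd (l : Fin m) : pd a (fun y => waveChr ξ (fun p => pd p H y) i j l) x =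
      waveChr ξ (fun p => pd a (pd p H) x) i j l := by
    simp (disch := fun_prop) only [waveChr, pd_const_mul, pd_add, pd_sub]
  rw [funext fun y => hw.chr_eq (hH.differentiable two_ne_zero) k i j y]
  simp only [Matrix.mulVec]
  rw [pd_dotProduct a _ (fun l => by unfold waveChr; fun_prop), funext hpd]

/-- Contracted with a covector that annihilates the null vector `η⁻¹ ξ`, only the `ξ ⊗ ξ` part of
`Γ` survives. -/
theorem sum_chr_mul (hw : IsPPWave η ξ H) (hH : Differentiable ℝ H) {α : Fin m → ℝ}
    (hα : ξ ⬝ᵥ η⁻¹ *ᵥ α = 0) (i j : Fin m) (x : Fin m → ℝ) :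
    ∑ p, Chr (kerrSchild η ξ H) p i j x * α p =
      -(1/2) * (ξ i * ξ j) * ((η⁻¹ *ᵥ fun p => pd p H x) ⬝ᵥ α) := by
  have hraise : ∑ p, Chr (kerrSchild η ξ H) p i j x * α p =
      η⁻¹ *ᵥ α ⬝ᵥ waveChr ξ (fun p => pd p H x) i j := by
    rw [hw.inv_mulVec_dotProduct, dotProduct_comm]
    simp only [hw.chr_eq hH, dotProduct]
  rw [hraise, dotProduct_waveChr, dotProduct_comm _ ξ, hα, hw.inv_mulVec_dotProduct,
    dotProduct_comm α]
  ring

theorem sum_chr_mul_chr (hw : IsPPWave η ξ H) (hH : Differentiable ℝ H) (l i j k : Fin m)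
    (x : Fin m → ℝ) :
    ∑ p, Chr (kerrSchild η ξ H) l i p x * Chr (kerrSchild η ξ H) p j k x =
      -(1/4) * (η⁻¹ *ᵥ ξ) l * (ξ i * ξ j * ξ k) *
        ((η⁻¹ *ᵥ fun p => pd p H x) ⬝ᵥ fun p => pd p H x) := by
  set d : Fin m → ℝ := fun p => pd p H x with hd
  have hcov : (fun p => Chr (kerrSchild η ξ H) l i p x) =
      ((1/2) * ((η⁻¹ *ᵥ ξ) l * d i - ξ i * (η⁻¹ *ᵥ d) l)) • ξ +
        ((1/2) * (η⁻¹ *ᵥ ξ) l * ξ i) • d := by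
    funext p
    rw [hw.chr_eq hH, Matrix.mulVec, dotProduct_waveChr]
    simp only [Pi.add_apply, Pi.smul_apply, smul_eq_mul, Matrix.mulVec, hd]
    ring
  have hnull : (ξ ⬝ᵥ η⁻¹ *ᵥ fun p => Chr (kerrSchild η ξ H) l i p x) = 0 := by
    simp [hcov, Matrix.mulVec_add, Matrix.mulVec_smul, hw.null, hd, hw.dotProduct_inv_mulVec_pd]
  simp only [mul_comm (Chr _ l i _ x)]
  rw [hw.sum_chr_mul hH hnull, hcov, dotProduct_add, dotProduct_smul, dotProduct_smul,
    hw.inv_mulVec_dotProduct d ξ, dotProduct_comm d, hw.inv_mulVec_dotProduct ξ d,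
    hw.dotProduct_inv_mulVec_pd]
  simp only [smul_eq_mul]
  ring

theorem riemUp_eq (hw : IsPPWave η ξ H) (hH : ContDiff ℝ 2 H) (i j k l : Fin m)
    (x : Fin m → ℝ) : RiemUp (kerrSchild η ξ H) i j k l x =
      (η⁻¹ *ᵥ waveCurv ξ (fun a b => pd a (pd b H) x) i j k) l := by
  have hH' : Differentiable ℝ H := hH.differentiable two_ne_zero
  have hquad : ∑ p, (Chr (kerrSchild η ξ H) l i p x * Chr (kerrSchild η ξ H) p j k x
      - Chr (kerrSchild η ξ H) l j p x * Chr (kerrSchild η ξ H) p i k x) = 0 := by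
    rw [Finset.sum_sub_distrib, hw.sum_chr_mul_chr hH', hw.sum_chr_mul_chr hH']
    ring
  have hlin : waveChr ξ (fun p => pd i (pd p H) x) j k - waveChr ξ (fun p => pd j (pd p H) x) i k =
      waveCurv ξ (fun a b => pd a (pd b H) x) i j k := by
    funext p
    simp only [Pi.sub_apply, waveChr, waveCurv, pd_comm hH j i]
    ring
  rw [RiemUp, hquad, hw.pd_chr hH, hw.pd_chr hH, ← hlin, Matrix.mulVec_sub]
  simp

theorem rm4_eq (hw : IsPPWave η ξ H) (hH : ContDiff ℝ 2 H) (i j k l : Fin m) (x : Fin m → ℝ) :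
    Rm4 (kerrSchild η ξ H) i j k l x = waveCurv ξ (fun a b => pd a (pd b H) x) i j k l := by
  simp only [Rm4, hw.riemUp_eq hH]
  exact congrFun
    (hw.kerrSchild_mulVec_inv_mulVec (hw.dotProduct_inv_mulVec_waveCurv hH i j k x) x) l

theorem pd_rm4 (hw : IsPPWave η ξ H) (hH : ContDiff ℝ 3 H) (a i j k l : Fin m) (x : Fin m → ℝ) :
    pd a (Rm4 (kerrSchild η ξ H) i j k l) x =
      waveCurv ξ (fun b c => pd a (pd b (pd c H)) x) i j k l := by
  have hd := differentiable_pd_pd hH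
  rw [funext fun y => hw.rm4_eq (hH.of_le (by norm_num)) i j k l y]
  simp (disch := fun_prop) only [waveCurv, pd_const_mul, pd_add, pd_sub]

theorem sum_chr_mul_rm4 (hw : IsPPWave η ξ H) (hH : ContDiff ℝ 2 H) (a i j k l : Fin m)
    (x : Fin m → ℝ) :
    ∑ p, Chr (kerrSchild η ξ H) p a l x * Rm4 (kerrSchild η ξ H) i j k p x =
      -(1/4) * ξ a * (ξ k * ξ l) *
        (ξ i * ((η⁻¹ *ᵥ fun p => pd p H x) ⬝ᵥ fun p => pd j (pd p H) x)
          - ξ j * ((η⁻¹ *ᵥ fun p => pd p H x) ⬝ᵥ fun p => pd i (pd p H) x)) := by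
  simp only [hw.rm4_eq hH]
  rw [hw.sum_chr_mul (hH.differentiable two_ne_zero)
    (hw.dotProduct_inv_mulVec_waveCurv hH i j k x), dotProduct_waveCurv,
    dotProduct_comm _ ξ, hw.dotProduct_inv_mulVec_pd]
  ring

/-- The Christoffel terms of `∇Rm` cancel in pairs: the contraction of `Γ` with one slot of `Rm` is
symmetric in that slot and its antisymmetric partner. -/
theorem covDRm_eq (hw : IsPPWave η ξ H) (hH : ContDiff ℝ 3 H) (a i j k l : Fin m)
    (x : Fin m → ℝ) : CovDRm (kerrSchild η ξ H) a i j k l x =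
      waveCurv ξ (fun b c => pd a (pd b (pd c H)) x) i j k l := by
  have hH' : ContDiff ℝ 2 H := hH.of_le (by norm_num)
  have hpair (i j k l) : Rm4 (kerrSchild η ξ H) i j k l x = Rm4 (kerrSchild η ξ H) k l i j x := by
    simp only [hw.rm4_eq hH']
    exact waveCurv_pair_symm ξ (fun b c => congrFun (pd_comm hH' b c) x) i j k l
  have hright (i j k l) : Rm4 (kerrSchild η ξ H) i j k l x =
      -Rm4 (kerrSchild η ξ H) i j l k x := by
    simp only [hw.rm4_eq hH']
    exact waveCurv_antisymm_right ξ _ i j k l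
  have hij : ∑ p, Chr (kerrSchild η ξ H) p a i x * Rm4 (kerrSchild η ξ H) p j k l x =
      -∑ p, Chr (kerrSchild η ξ H) p a j x * Rm4 (kerrSchild η ξ H) i p k l x := by
    simp only [hpair _ _ k l, hright k l _ j, mul_neg, Finset.sum_neg_distrib]
    rw [hw.sum_chr_mul_rm4 hH', hw.sum_chr_mul_rm4 hH']
    ring
  have hkl : ∑ p, Chr (kerrSchild η ξ H) p a k x * Rm4 (kerrSchild η ξ H) i j p l x =
      -∑ p, Chr (kerrSchild η ξ H) p a l x * Rm4 (kerrSchild η ξ H) i j k p x := by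
    simp only [hright i j _ l, mul_neg, Finset.sum_neg_distrib]
    rw [hw.sum_chr_mul_rm4 hH', hw.sum_chr_mul_rm4 hH']
    ring
  rw [CovDRm, hw.pd_rm4 hH]
  simp only [Finset.sum_add_distrib]
  rw [hij, hkl]
  ring

end IsPPWave

section BrinkmannCoordinates

variable {n : ℕ}

theorem eq_zero_or_eq_one_or_two_le (i : Fin (n + 2)) : i = 0 ∨ i = 1 ∨ 2 ≤ (i : ℕ) := by
  simp only [Fin.ext_iff, Fin.val_zero, Fin.val_one]
  omega

theorem ne_zero_of_two_le {i : Fin (n + 2)} (hi : 2 ≤ (i : ℕ)) : i ≠ 0 := by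
  rintro rfl
  simp at hi

theorem ne_one_of_two_le {i : Fin (n + 2)} (hi : 2 ≤ (i : ℕ)) : i ≠ 1 := by
  rintro rfl
  simp at hi

theorem waveCurv_single_spatial (S : Fin (n + 2) → Fin (n + 2) → ℝ) {i j : Fin (n + 2)}
    (hi : 2 ≤ (i : ℕ)) (hj : 2 ≤ (j : ℕ)) :
    waveCurv (Pi.single 1 1) S i 1 1 j = -(1/2) * S i j := by
  simp [waveCurv, ne_one_of_two_le hi, ne_one_of_two_le hj]

variable {S : Fin (n + 2) → Fin (n + 2) → ℝ}

theorem waveCurv_single_eq_zero_of_left (hS : ∀ b, S 0 b = 0) {i j : Fin (n + 2)}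
    (hij : ¬((i = 1 ∧ 2 ≤ (j : ℕ)) ∨ (2 ≤ (i : ℕ) ∧ j = 1))) (k l : Fin (n + 2)) :
    waveCurv (Pi.single 1 1) S i j k l = 0 := by
  rcases eq_zero_or_eq_one_or_two_le i with rfl | rfl | hi <;>
    rcases eq_zero_or_eq_one_or_two_le j with rfl | rfl | hj <;>
    simp_all [waveCurv, ne_one_of_two_le]

theorem waveCurv_single_eq_zero_of_not_mixed (hS : ∀ b, S 0 b = 0) (hsymm : ∀ a b, S a b = S b a)
    {i j k l : Fin (n + 2)}
    (hijkl : ¬(((i = 1 ∧ 2 ≤ (j : ℕ)) ∨ (2 ≤ (i : ℕ) ∧ j = 1)) ∧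
      ((k = 1 ∧ 2 ≤ (l : ℕ)) ∨ (2 ≤ (k : ℕ) ∧ l = 1)))) :
    waveCurv (Pi.single 1 1) S i j k l = 0 := by
  rcases not_and_or.mp hijkl with hij | hkl
  · exact waveCurv_single_eq_zero_of_left hS hij k l
  · rw [waveCurv_pair_symm _ hsymm]
    exact waveCurv_single_eq_zero_of_left hS hkl i j

theorem waveCurv_single_eq_zero_iff (hS : ∀ b, S 0 b = 0) (hsymm : ∀ a b, S a b = S b a) :
    (∀ i j k l, waveCurv (Pi.single 1 1) S i j k l = 0) ↔
      ∀ i j : Fin (n + 2), 2 ≤ (i : ℕ) → 2 ≤ (j : ℕ) → S i j = 0 := by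
  constructor
  · intro h i j hi hj
    simpa [waveCurv_single_spatial S hi hj] using h i 1 1 j
  · intro h i j k l
    by_cases hijkl : ((i = 1 ∧ 2 ≤ (j : ℕ)) ∨ (2 ≤ (i : ℕ) ∧ j = 1)) ∧
      ((k = 1 ∧ 2 ≤ (l : ℕ)) ∨ (2 ≤ (k : ℕ) ∧ l = 1))
    · rcases hijkl with ⟨⟨rfl, hj⟩ | ⟨hi, rfl⟩, ⟨rfl, hl⟩ | ⟨hk, rfl⟩⟩ <;>
        simp_all [waveCurv, ne_one_of_two_le]
    · exact waveCurv_single_eq_zero_of_not_mixed hS hsymm hijkl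

variable {H : (Fin (n + 2) → ℝ) → ℝ} {η : Matrix (Fin (n + 2)) (Fin (n + 2)) ℝ}

theorem isPPWave_single_one (hη : η.IsSymm) (hdet : IsUnit η.det)
    (hdv : η *ᵥ Pi.single 0 1 = Pi.single 1 1) (hH0 : ∀ x, pd 0 H x = 0) :
    IsPPWave η (Pi.single 1 1) H := by
  have hraise : η⁻¹ *ᵥ Pi.single 1 1 = Pi.single 0 1 := by
    rw [← hdv, Matrix.mulVec_mulVec, Matrix.nonsing_inv_mul η hdet, Matrix.one_mulVec]
  refine ⟨hη, hdet, ?_, fun x => ?_⟩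
  · simp [hraise]
  · rw [hraise]
    exact hH0 x

theorem covDRm_eq_zero_iff (hw : IsPPWave η (Pi.single 1 1) H) (hH : ContDiff ℝ 3 H)
    (hH0 : ∀ x, pd 0 H x = 0) (m : Fin (n + 2)) (x : Fin (n + 2) → ℝ) :
    (∀ i j k l, CovDRm (kerrSchild η (Pi.single 1 1) H) m i j k l x = 0) ↔
      ∀ i j : Fin (n + 2), 2 ≤ (i : ℕ) → 2 ≤ (j : ℕ) → pd m (pd i (pd j H)) x = 0 := by
  simp only [hw.covDRm_eq hH]
  exact waveCurv_single_eq_zero_iff (fun b => pd_pd_pd_eq_zero_of_middle hH hH0 m b x)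
    (fun a b => pd_pd_pd_comm hH m a b x)

theorem covDRm_eq_zero_of_not_mixed (hw : IsPPWave η (Pi.single 1 1) H) (hH : ContDiff ℝ 3 H)
    (hH0 : ∀ x, pd 0 H x = 0) {a b c d : Fin (n + 2)}
    (habcd : ¬(((a = 1 ∧ 2 ≤ (b : ℕ)) ∨ (2 ≤ (a : ℕ) ∧ b = 1)) ∧
      ((c = 1 ∧ 2 ≤ (d : ℕ)) ∨ (2 ≤ (c : ℕ) ∧ d = 1))))
    (m : Fin (n + 2)) (x : Fin (n + 2) → ℝ) :
    CovDRm (kerrSchild η (Pi.single 1 1) H) m a b c d x = 0 := by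
  rw [hw.covDRm_eq hH]
  exact waveCurv_single_eq_zero_of_not_mixed (fun b => pd_pd_pd_eq_zero_of_middle hH hH0 m b x)
    (fun a b => pd_pd_pd_comm hH m a b x) habcd

theorem covDRm_eq_zero_iff_pd_pd_pd_eq_zero (hw : IsPPWave η (Pi.single 1 1) H)
    (hH : ContDiff ℝ 3 H) (hH0 : ∀ x, pd 0 H x = 0) :
    (∀ (x : Fin (n + 2) → ℝ) (m i j k l : Fin (n + 2)), (m = 0 ∨ 2 ≤ (m : ℕ)) →
        CovDRm (kerrSchild η (Pi.single 1 1) H) m i j k l x = 0) ↔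
      ∀ (x : Fin (n + 2) → ℝ) (i j k : Fin (n + 2)),
        2 ≤ (i : ℕ) → 2 ≤ (j : ℕ) → 2 ≤ (k : ℕ) → pd i (pd j (pd k H)) x = 0 := by
  have hzero := covDRm_eq_zero_iff hw hH hH0
  constructor
  · intro h x i j k hi
    exact (hzero i x).mp (fun a b c d => h x i a b c d (Or.inr hi)) j k
  · intro h x m i j k l hm
    refine (hzero m x).mpr (fun a b ha hb => ?_) i j k l
    rcases hm with rfl | hm
    · exact pd_pd_pd_eq_zero hH hH0 a b x
    · exact h x m a b hm ha hb

theorem stmt_13_general (hη : η.IsSymm) (hdet : IsUnit η.det)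
    (hdv : η *ᵥ Pi.single 0 1 = Pi.single 1 1) (hH : ContDiff ℝ 3 H)
    (hHv : ∀ (x : Fin (n + 2) → ℝ) (c : ℝ), H (Function.update x 0 c) = H x) :
    ((∀ (x : Fin (n + 2) → ℝ) (m i j k l : Fin (n + 2)), (m = 0 ∨ 2 ≤ (m : ℕ)) →
        CovDRm (kerrSchild η (Pi.single 1 1) H) m i j k l x = 0) ↔
      (∀ (x : Fin (n + 2) → ℝ) (i j k : Fin (n + 2)),
        2 ≤ (i : ℕ) → 2 ≤ (j : ℕ) → 2 ≤ (k : ℕ) → pd i (pd j (pd k H)) x = 0)) ∧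
    ((∀ (x : Fin (n + 2) → ℝ) (i j k : Fin (n + 2)),
        2 ≤ (i : ℕ) → 2 ≤ (j : ℕ) → 2 ≤ (k : ℕ) → pd i (pd j (pd k H)) x = 0) →
      (∀ (x : Fin (n + 2) → ℝ) (i j : Fin (n + 2)), 2 ≤ (i : ℕ) → 2 ≤ (j : ℕ) →
        CovDRm (kerrSchild η (Pi.single 1 1) H) 1 i 1 1 j x =
          -(1/2) * pd 1 (pd i (pd j H)) x) ∧
      (∀ (x : Fin (n + 2) → ℝ) (m a b c d : Fin (n + 2)),
        ¬ (m = 1 ∧ ((a = 1 ∧ 2 ≤ (b : ℕ)) ∨ (2 ≤ (a : ℕ) ∧ b = 1)) ∧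
            ((c = 1 ∧ 2 ≤ (d : ℕ)) ∨ (2 ≤ (c : ℕ) ∧ d = 1))) →
        CovDRm (kerrSchild η (Pi.single 1 1) H) m a b c d x = 0) ∧
      ((∀ (x : Fin (n + 2) → ℝ) (m a b c d : Fin (n + 2)),
          CovDRm (kerrSchild η (Pi.single 1 1) H) m a b c d x = 0) ↔
        (∀ (x : Fin (n + 2) → ℝ) (i j : Fin (n + 2)), 2 ≤ (i : ℕ) → 2 ≤ (j : ℕ) →
          pd 1 (pd i (pd j H)) x = 0))) := by
  have hH0 := pd_eq_zero_of_update (hH.differentiable three_ne_zero) hHv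
  have hw := isPPWave_single_one hη hdet hdv hH0
  have hplane := covDRm_eq_zero_iff_pd_pd_pd_eq_zero hw hH hH0
  refine ⟨hplane, fun h => ⟨fun x i j hi hj => ?_, fun x m a b c d hne => ?_, ?_⟩⟩
  · rw [hw.covDRm_eq hH, waveCurv_single_spatial _ hi hj]
  · by_cases hm : m = 1
    · exact covDRm_eq_zero_of_not_mixed hw hH hH0 (fun hmixed => hne ⟨hm, hmixed⟩) m x
    · have hm' := (eq_zero_or_eq_one_or_two_le m).imp_right (Or.resolve_left · hm)
      exact hplane.mpr h x m a b c d hm'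
  · refine forall_congr' fun x => ?_
    rw [← covDRm_eq_zero_iff hw hH hH0]
    refine ⟨fun h' => h' 1, fun h' m => ?_⟩
    rcases eq_zero_or_eq_one_or_two_le m with hm | rfl | hm
    · exact fun a b c d => hplane.mpr h x m a b c d (Or.inl hm)
    · exact h'
    · exact fun a b c d => hplane.mpr h x m a b c d (Or.inr hm)

end BrinkmannCoordinates

theorem kerrSchild_permMatrix_swap_apply {n : ℕ} (H : (Fin (n + 2) → ℝ) → ℝ)
    (x : Fin (n + 2) → ℝ) (i j : Fin (n + 2)) :
    kerrSchild ((Equiv.swap 0 1).permMatrix ℝ) (Pi.single 1 1) H x i j =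
      if (i = 0 ∧ j = 1) ∨ (i = 1 ∧ j = 0) then 1
      else if i = 1 ∧ j = 1 then H x
      else if i = j ∧ 2 ≤ (i : ℕ) then 1
      else 0 := by
  rcases eq_zero_or_eq_one_or_two_le i with rfl | rfl | hi
  · simp [kerrSchild, vecMulVec_apply, Equiv.Perm.permMatrix, PEquiv.toMatrix_apply, eq_comm]
  · by_cases hj : j = 1 <;>
    simp [kerrSchild, vecMulVec_apply, Equiv.Perm.permMatrix, PEquiv.toMatrix_apply, eq_comm, hj]
  · have h0 := ne_zero_of_two_le hi
    have h1 := ne_one_of_two_le hi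
    simp [kerrSchild, vecMulVec_apply, Equiv.Perm.permMatrix, PEquiv.toMatrix_apply,
      Equiv.swap_apply_of_ne_of_ne h0 h1, h0, h1, hi]

theorem isSymm_permMatrix_swap {ι : Type*} [DecidableEq ι] (a b : ι) :
    ((Equiv.swap a b).permMatrix ℝ).IsSymm := by
  rw [Matrix.IsSymm, Matrix.transpose_permMatrix, Equiv.swap_inv]

theorem isUnit_det_permMatrix {ι : Type*} [Fintype ι] [DecidableEq ι] (σ : Equiv.Perm ι) :
    IsUnit (σ.permMatrix ℝ).det := by
  rw [Matrix.det_permutation]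
  exact (Units.isUnit _).map (Int.castRingHom ℝ)

theorem permMatrix_swap_mulVec_single {ι : Type*} [Fintype ι] [DecidableEq ι] (a b : ι) :
    (Equiv.swap a b).permMatrix ℝ *ᵥ Pi.single a 1 = Pi.single b 1 := by
  rw [Matrix.permMatrix_mulVec]
  ext i
  simp [Pi.single_apply, Equiv.swap_apply_eq_iff]

/-- For the pp-wave metric in Brinkmann coordinates `(v,u,x²,…,xⁿ)` (index `0 = v`, `1 = u`):
`∇Rm` vanishes in all coordinate directions orthogonal to `∂_v` other than `∂_u` iff all third
derivatives `∂ᵢ∂ⱼ∂ₖH` (`i,j,k ≥ 2`) vanish, i.e. iff `H` is quadratic in `x²,…,xⁿ`; and in that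
case `(∇_{∂ᵤ}Rm)(∂ᵢ,∂ᵤ,∂ᵤ,∂ⱼ) = −(1/2)∂ᵤ∂ᵢ∂ⱼH`, every component of `∇Rm` not obtained from these
by the curvature symmetries vanishes, and `g` is locally symmetric iff all `∂ᵤ∂ᵢ∂ⱼH = 0`. -/
theorem stmt_13 (n : ℕ) (hn : 2 ≤ n)
    (H : (Fin (n+1) → ℝ) → ℝ) (hH : ContDiff ℝ (⊤ : ℕ∞) H)
    (hHv : ∀ (x : Fin (n+1) → ℝ) (c : ℝ), H (Function.update x 0 c) = H x)
    (g : (Fin (n+1) → ℝ) → Matrix (Fin (n+1)) (Fin (n+1)) ℝ)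
    (hg : ∀ x (i j : Fin (n+1)), g x i j =
      if (i = 0 ∧ j = 1) ∨ (i = 1 ∧ j = 0) then 1
      else if i = 1 ∧ j = 1 then H x
      else if i = j ∧ 2 ≤ (i : ℕ) then 1
      else 0) :
    ((∀ (x : Fin (n+1) → ℝ) (m i j k l : Fin (n+1)), (m = 0 ∨ 2 ≤ (m : ℕ)) →
        CovDRm g m i j k l x = 0) ↔
      (∀ (x : Fin (n+1) → ℝ) (i j k : Fin (n+1)),
        2 ≤ (i : ℕ) → 2 ≤ (j : ℕ) → 2 ≤ (k : ℕ) → pd i (pd j (pd k H)) x = 0)) ∧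
    ((∀ (x : Fin (n+1) → ℝ) (i j k : Fin (n+1)),
        2 ≤ (i : ℕ) → 2 ≤ (j : ℕ) → 2 ≤ (k : ℕ) → pd i (pd j (pd k H)) x = 0) →
      (∀ (x : Fin (n+1) → ℝ) (i j : Fin (n+1)), 2 ≤ (i : ℕ) → 2 ≤ (j : ℕ) →
        CovDRm g 1 i 1 1 j x = -(1/2) * pd 1 (pd i (pd j H)) x) ∧
      (∀ (x : Fin (n+1) → ℝ) (m a b c d : Fin (n+1)),
        ¬ (m = 1 ∧ ((a = 1 ∧ 2 ≤ (b : ℕ)) ∨ (2 ≤ (a : ℕ) ∧ b = 1)) ∧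
            ((c = 1 ∧ 2 ≤ (d : ℕ)) ∨ (2 ≤ (c : ℕ) ∧ d = 1))) →
        CovDRm g m a b c d x = 0) ∧
      ((∀ (x : Fin (n+1) → ℝ) (m a b c d : Fin (n+1)), CovDRm g m a b c d x = 0) ↔
        (∀ (x : Fin (n+1) → ℝ) (i j : Fin (n+1)), 2 ≤ (i : ℕ) → 2 ≤ (j : ℕ) →
          pd 1 (pd i (pd j H)) x = 0))) := by
  obtain ⟨n, rfl⟩ : ∃ k, n = k + 1 := ⟨n - 1, by omega⟩
  obtain rfl : g = kerrSchild ((Equiv.swap 0 1).permMatrix ℝ) (Pi.single 1 1) H := by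
    ext x i j
    rw [hg, kerrSchild_permMatrix_swap_apply]
  exact stmt_13_general (isSymm_permMatrix_swap 0 1) (isUnit_det_permMatrix _)
    (permMatrix_swap_mulVec_single 0 1) (hH.of_le (WithTop.coe_le_coe.2 le_top))
    hHv
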